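/- Let F be a finite field with q elements and let μ ∈ F[X] be a monic polynomial of degree d ≥ 1. If g is sampled uniformly at random from the quotient ring R = F[X]/(μ) (equivalently, uniformly among polynomials of degree < d), then Pr[gcd(g, μ) = 1] ≥ 1/(6⌈log_q d⌉). -/

import Mathlib

open Polynomial in
lemma aux_sum_deg {F : Type} [Field F] (S : Finset F[X])
    (hm : ∀ p ∈ S, p.Monic) (hi : ∀ p ∈ S, Irreducible p) (f : F[X]) (hf : f ≠ 0)
    (hdvd : ∀ p ∈ S, p ∣ f) : ∑ p ∈ S, p.natDegree ≤ f.natDegree := by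
  have h : ∏ p ∈ S, p ∣ f := by
    apply Finset.prod_dvd_of_coprime
    · intro p hp r hr hne
      refine (((hi p hp).coprime_iff_not_dvd).2 ?_)
      intro hpr
      exact hne (eq_of_monic_of_associated (hm p hp) (hm r hr)
        ((hi p hp).associated_of_dvd (hi r hr) hpr))
    · exact hdvd
  have h2 := natDegree_le_of_dvd h hf
  rwa [natDegree_prod _ _ (fun p hp => (hm p hp).ne_zero)] at h2

open Polynomial in
lemma aux_finite (F : Type) [Field F] [Fintype F] (d : ℕ) :
    {g : F[X] | g.degree < d}.Finite := by
  have : Finite (degreeLT F d) := Finite.of_equiv _ (degreeLTEquiv F d).symm.toEquiv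
  have h := Set.toFinite ((degreeLT F d : Submodule F F[X]) : Set F[X])
  convert h using 1
  ext g
  simp [mem_degreeLT]

open Polynomial in
lemma aux_count (F : Type) [Field F] [Fintype F] (S : Finset F[X])
    (hm : ∀ p ∈ S, p.Monic) (hi : ∀ p ∈ S, Irreducible p) :
    ∀ d : ℕ, ∑ p ∈ S, p.natDegree ≤ d →
      (({g : F[X] | g.degree < d ∧ ∀ p ∈ S, ¬ p ∣ g}.ncard : ℕ) : ℝ) =
        (Fintype.card F : ℝ) ^ d *
          ∏ p ∈ S, (1 - 1 / (Fintype.card F : ℝ) ^ p.natDegree) := by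
  classical
  induction S using Finset.induction_on with
  | empty =>
    intro d _
    have h : Nat.card (degreeLT F d) = Fintype.card F ^ d := by
      rw [Nat.card_congr (degreeLTEquiv F d).toEquiv]
      simp
    have h2 : {g : F[X] | g.degree < d ∧ ∀ p ∈ (∅ : Finset F[X]), ¬ p ∣ g}
        = ((degreeLT F d : Submodule F F[X]) : Set F[X]) := by
      ext g
      simp [mem_degreeLT]
    rw [h2, ← Nat.card_coe_set_eq]
    have h3 : Nat.card ((degreeLT F d : Submodule F F[X]) : Set F[X]) = Fintype.card F ^ d := h
    rw [h3]
    simp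
  | insert a S ha ih =>
    intro d hsum
    rw [Finset.sum_insert ha] at hsum
    have ham := hm a (by simp)
    have hai := hi a (by simp)
    have hm' : ∀ p ∈ S, p.Monic := fun p hp => hm p (by simp [hp])
    have hi' : ∀ p ∈ S, Irreducible p := fun p hp => hi p (by simp [hp])
    have ih' := ih hm' hi'
    have e1 := ih' d (by omega)
    have e2 := ih' (d - a.natDegree) (by omega)
    set A := {g : F[X] | g.degree < d ∧ ∀ p ∈ S, ¬ p ∣ g} with hA
    set B := {g : F[X] | g.degree < (d - a.natDegree : ℕ) ∧ ∀ p ∈ S, ¬ p ∣ g} with hB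
    have hAf : A.Finite := (aux_finite F d).subset (fun g hg => hg.1)
    have himg : (fun h => a * h) '' B ⊆ A := by
      rintro _ ⟨h, ⟨hh1, hh2⟩, rfl⟩
      refine ⟨?_, ?_⟩
      · by_cases h0 : h = 0
        · subst h0
          simp
        · rw [degree_eq_natDegree h0] at hh1
          have hh3 : h.natDegree < d - a.natDegree := by exact_mod_cast hh1
          show (a * h).degree < d
          rw [degree_eq_natDegree (mul_ne_zero ham.ne_zero h0),
            natDegree_mul ham.ne_zero h0]
          have : a.natDegree + h.natDegree < d := by omega
          exact_mod_cast this
      · intro p hp hpd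
        rcases (hi' p hp).prime.dvd_or_dvd hpd with h1 | h1
        · have : p = a := eq_of_monic_of_associated (hm' p hp) ham
            ((hi' p hp).associated_of_dvd hai h1)
          exact ha (this ▸ hp)
        · exact hh2 p hp h1
    have hset : {g : F[X] | g.degree < d ∧ ∀ p ∈ insert a S, ¬ p ∣ g}
        = A \ ((fun h => a * h) '' B) := by
      ext g
      constructor
      · rintro ⟨h1, h2⟩
        refine ⟨⟨h1, fun p hp => h2 p (by simp [hp])⟩, ?_⟩
        rintro ⟨h, _, rfl⟩
        exact h2 a (by simp) (dvd_mul_right a h)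
      · rintro ⟨⟨h1, h2⟩, h3⟩
        refine ⟨h1, ?_⟩
        intro p hp
        rcases Finset.mem_insert.1 hp with rfl | hp
        · rintro ⟨h, rfl⟩
          apply h3
          refine ⟨h, ⟨?_, fun r hr hrd => h2 r hr (hrd.mul_left p)⟩, rfl⟩
          by_cases h0 : h = 0
          · subst h0
            simp
          · rw [degree_eq_natDegree (mul_ne_zero ham.ne_zero h0),
              natDegree_mul ham.ne_zero h0] at h1
            have h4 : p.natDegree + h.natDegree < d := by exact_mod_cast h1
            rw [degree_eq_natDegree h0]
            have : h.natDegree < d - p.natDegree := by omega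
            exact_mod_cast this
        · exact h2 p hp
    have hinj : Function.Injective (fun h : F[X] => a * h) :=
      mul_right_injective₀ ham.ne_zero
    rw [hset, Set.cast_ncard_sdiff himg hAf, Set.ncard_image_of_injective _ hinj, e1, e2,
      Finset.prod_insert ha]
    have hq : (Fintype.card F : ℝ) ≠ 0 := by simp
    have hd : d = (d - a.natDegree) + a.natDegree := by omega
    have hpow : (Fintype.card F : ℝ) ^ d
        = (Fintype.card F : ℝ) ^ (d - a.natDegree) * (Fintype.card F : ℝ) ^ a.natDegree := by
      rw [← pow_add, ← hd]
    rw [hpow]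
    field_simp

open Polynomial in
lemma aux_card_deg (F : Type) [Field F] [Fintype F] (S : Finset F[X])
    (hm : ∀ p ∈ S, p.Monic) (hi : ∀ p ∈ S, Irreducible p) (j : ℕ) (hj : 1 ≤ j)
    (hS : ∀ p ∈ S, p.natDegree = j) : S.card * j ≤ Fintype.card F ^ j := by
  have h1 : 1 < Fintype.card F := Fintype.one_lt_card
  have h := aux_sum_deg S hm hi (X ^ (Fintype.card F) ^ j - X)
    (FiniteField.X_pow_card_pow_sub_X_ne_zero F (by omega) h1) (by
      intro p hp
      have := (Irreducible.natDegree_dvd_iff_dvd_X_pow_card_pow_sub_X (hi p hp) (n := j)).1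
        (by rw [hS p hp])
      rwa [Nat.card_eq_fintype_card] at this)
  rw [FiniteField.X_pow_card_pow_sub_X_natDegree_eq F (by omega) h1,
    Finset.sum_congr rfl hS] at h
  simpa using h

lemma aux_bern (x : ℝ) (hx0 : 0 ≤ x) (hx1 : x ≤ 1) (n : ℕ) : 1 - n * x ≤ (1 - x) ^ n := by
  have := one_add_mul_le_pow (a := -x) (by linarith) n
  calc 1 - n * x = 1 + n * (-x) := by ring
    _ ≤ _ := this
    _ = _ := by ring_nf

lemma aux_quarter (q : ℕ) (hq : 2 ≤ q) : (1 / 4 : ℝ) ≤ (1 - 1 / (q : ℝ)) ^ q := by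
  have hq' : (2 : ℝ) ≤ q := by exact_mod_cast hq
  have h1 : 1 / (q : ℝ) ≤ 1 := by
    rw [div_le_one (by linarith)]; linarith
  have h := one_add_mul_self_le_rpow_one_add (s := -(1 / (q : ℝ))) (by linarith)
    (p := (q : ℝ) / 2) (by linarith)
  have h2 : 1 + (q : ℝ) / 2 * -(1 / (q : ℝ)) = 1 / 2 := by
    field_simp; norm_num
  rw [h2] at h
  have h3 : ((1 + -(1 / (q : ℝ))) ^ ((q : ℝ) / 2)) ^ 2 = (1 - 1 / (q : ℝ)) ^ q := by
    rw [← Real.rpow_natCast, ← Real.rpow_mul (by linarith)]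
    rw [← Real.rpow_natCast]
    congr 1
    push_cast
    ring
  rw [← h3]
  nlinarith

open Polynomial in
lemma aux_main (F : Type) [Field F] [Fintype F] (S : Finset F[X])
    (hm : ∀ p ∈ S, p.Monic) (hi : ∀ p ∈ S, Irreducible p) (L : ℕ) (hL : 1 ≤ L)
    (hS : ∑ p ∈ S, p.natDegree ≤ Fintype.card F ^ L) :
    1 / (6 * (L : ℝ)) ≤ ∏ p ∈ S, (1 - 1 / (Fintype.card F : ℝ) ^ p.natDegree) := by
  classical
  have hq1 : 2 ≤ Fintype.card F := Fintype.one_lt_card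
  set q := Fintype.card F with hq
  have hq' : (2 : ℝ) ≤ q := by exact_mod_cast hq1
  have hdeg : ∀ p ∈ S, 1 ≤ p.natDegree := fun p hp => (hi p hp).natDegree_pos
  have hinv : ∀ j : ℕ, 1 / (q : ℝ) ^ j ≤ 1 := fun j => by
    rw [div_le_one (by positivity)]
    exact one_le_pow₀ (by linarith)
  have hinv0 : ∀ j : ℕ, 0 ≤ 1 / (q : ℝ) ^ j := fun j => by positivity
  -- small degrees
  have small : ∀ M : ℕ, 1 ≤ M → 1 / (4 * (M : ℝ)) ≤
      ∏ p ∈ S.filter (fun p => p.natDegree ≤ M), (1 - 1 / (q : ℝ) ^ p.natDegree) := by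
    intro M hM
    induction M, hM using Nat.le_induction with
    | base =>
      have hone : ∀ p ∈ S.filter (fun p => p.natDegree ≤ 1), p.natDegree = 1 := by
        intro p hp
        rw [Finset.mem_filter] at hp
        have := hdeg p hp.1
        omega
      have hc := aux_card_deg F (S.filter (fun p => p.natDegree ≤ 1))
        (fun p hp => hm p (Finset.mem_filter.1 hp).1)
        (fun p hp => hi p (Finset.mem_filter.1 hp).1) 1 le_rfl hone
      rw [Finset.prod_congr rfl (fun p hp => by rw [hone p hp]), Finset.prod_const]
      have h1 := hinv 1
      have h0 := hinv0 1
      simp only [pow_one, mul_one] at *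
      calc (1 / (4 * ((1 : ℕ) : ℝ))) = 1 / 4 := by norm_num
        _ ≤ (1 - 1 / (q : ℝ)) ^ q := aux_quarter q hq1
        _ ≤ _ := pow_le_pow_of_le_one (by linarith) (by linarith) hc
    | succ M hM ih =>
      have hc := aux_card_deg F (S.filter (fun p => p.natDegree = M + 1))
        (fun p hp => hm p (Finset.mem_filter.1 hp).1)
        (fun p hp => hi p (Finset.mem_filter.1 hp).1) (M + 1) (by omega)
        (fun p hp => (Finset.mem_filter.1 hp).2)
      have hsplit : S.filter (fun p => p.natDegree ≤ M + 1) =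
          S.filter (fun p => p.natDegree ≤ M) ∪ S.filter (fun p => p.natDegree = M + 1) := by
        ext p
        simp only [Finset.mem_filter, Finset.mem_union]
        constructor
        · rintro ⟨h1, h2⟩
          by_cases h : p.natDegree ≤ M
          · exact Or.inl ⟨h1, h⟩
          · exact Or.inr ⟨h1, by omega⟩
        · rintro (⟨h1, h2⟩ | ⟨h1, h2⟩)
          · exact ⟨h1, by omega⟩
          · exact ⟨h1, by omega⟩
      have hdisj : Disjoint (S.filter (fun p => p.natDegree ≤ M))
          (S.filter (fun p => p.natDegree = M + 1)) := by
        rw [Finset.disjoint_left]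
        intro p h1 h2
        rw [Finset.mem_filter] at h1 h2
        omega
      rw [hsplit, Finset.prod_union hdisj]
      have hM' : (1 : ℝ) ≤ M := by exact_mod_cast hM
      have h2 : 1 - 1 / ((M : ℝ) + 1) ≤ ∏ p ∈ S.filter (fun p => p.natDegree = M + 1),
          (1 - 1 / (q : ℝ) ^ p.natDegree) := by
        rw [Finset.prod_congr rfl (fun p hp => by rw [(Finset.mem_filter.1 hp).2]),
          Finset.prod_const]
        refine le_trans ?_ (aux_bern _ (hinv0 _) (hinv _) _)
        have hc' : ((S.filter (fun p => p.natDegree = M + 1)).card : ℝ) * (M + 1)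
            ≤ (q : ℝ) ^ (M + 1) := by exact_mod_cast hc
        have : ((S.filter (fun p => p.natDegree = M + 1)).card : ℝ) * (1 / (q : ℝ) ^ (M + 1))
            ≤ 1 / ((M : ℝ) + 1) := by
          rw [mul_one_div, div_le_div_iff₀ (by positivity) (by positivity)]
          linarith
        linarith
      have h3 : 0 ≤ 1 - 1 / ((M : ℝ) + 1) := by
        rw [sub_nonneg, div_le_one (by linarith)]; linarith
      calc 1 / (4 * ((M + 1 : ℕ) : ℝ)) = 1 / (4 * (M : ℝ)) * (1 - 1 / ((M : ℝ) + 1)) := by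
            push_cast; field_simp; ring
        _ ≤ _ := mul_le_mul ih h2 h3 (le_trans (by positivity) ih)
  have hsm := small L hL
  rw [← Finset.prod_filter_mul_prod_filter_not S (fun p => p.natDegree ≤ L)]
  set T := S.filter (fun p => ¬ p.natDegree ≤ L) with hT
  have hTc : T.card * (L + 1) ≤ q ^ L := by
    calc T.card * (L + 1) = ∑ p ∈ T, (L + 1) := by simp
      _ ≤ ∑ p ∈ T, p.natDegree := Finset.sum_le_sum (fun p hp => by
          have := (Finset.mem_filter.1 hp).2
          omega)
      _ ≤ ∑ p ∈ S, p.natDegree := Finset.sum_le_sum_of_subset (Finset.filter_subset _ _)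
      _ ≤ _ := hS
  have hL' : (1 : ℝ) ≤ L := by exact_mod_cast hL
  have big : (3 / 4 : ℝ) ≤ ∏ p ∈ T, (1 - 1 / (q : ℝ) ^ p.natDegree) := by
    calc (3 / 4 : ℝ) ≤ 1 - T.card * (1 / (q : ℝ) ^ (L + 1)) := by
          have hc' : (T.card : ℝ) * (L + 1) ≤ (q : ℝ) ^ L := by exact_mod_cast hTc
          have : (T.card : ℝ) * (1 / (q : ℝ) ^ (L + 1)) ≤ 1 / 4 := by
            rw [mul_one_div, div_le_div_iff₀ (by positivity) (by positivity), pow_succ]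
            have h0 : (0 : ℝ) ≤ T.card := by positivity
            have hp : (0 : ℝ) ≤ (q : ℝ) ^ L := by positivity
            nlinarith
          linarith
      _ ≤ (1 - 1 / (q : ℝ) ^ (L + 1)) ^ T.card := aux_bern _ (hinv0 _) (hinv _) _
      _ = ∏ p ∈ T, (1 - 1 / (q : ℝ) ^ (L + 1)) := by rw [Finset.prod_const]
      _ ≤ _ := by
          apply Finset.prod_le_prod
          · intro p _
            linarith [hinv (L + 1)]
          · intro p hp
            have h1 := (Finset.mem_filter.1 hp).2
            have : 1 / (q : ℝ) ^ p.natDegree ≤ 1 / (q : ℝ) ^ (L + 1) :=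
              one_div_le_one_div_of_le (by positivity)
                (pow_le_pow_right₀ (by linarith) (by omega))
            linarith
  calc 1 / (6 * (L : ℝ)) ≤ 1 / (4 * (L : ℝ)) * (3 / 4) := by
        rw [div_mul_div_comm, div_le_div_iff₀ (by positivity) (by positivity)]
        linarith
    _ ≤ _ := mul_le_mul hsm big (by norm_num) (le_trans (by positivity) hsm)


open Polynomial in
open scoped Classical in
/-- Over a finite field with `q` elements, if `μ` is a monic polynomial of degree `d ≥ 1`
and `g` is a uniformly random polynomial of degree `< d` (a uniform element of
`F[X]/(μ)`), then `Pr[gcd(g, μ) = 1] ≥ 1/(6⌈log_q d⌉)`. -/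
theorem prob_coprime_ge (F : Type) [Field F] [Fintype F]
    (μ : Polynomial F) (hμ : μ.Monic) (d : ℕ) (hd : d = μ.natDegree) (hd1 : 1 ≤ d) :
    1 / (6 * (Nat.clog (Fintype.card F) d : ℝ)) ≤
      ((Finset.univ.filter
          (fun c : Fin d → F =>
            IsCoprime (∑ i : Fin d, Polynomial.C (c i) * Polynomial.X ^ (i : ℕ)) μ)).card : ℝ) /
        (Fintype.card F : ℝ) ^ d := by
  by_cases hL : Nat.clog (Fintype.card F) d = 0
  · rw [hL]
    simp only [Nat.cast_zero, mul_zero, div_zero]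
    positivity
  have hμ0 : μ ≠ 0 := hμ.ne_zero
  set S := (UniqueFactorizationMonoid.normalizedFactors μ).toFinset with hS
  have hi : ∀ p ∈ S, Irreducible p := fun p hp =>
    UniqueFactorizationMonoid.irreducible_of_normalized_factor p (Multiset.mem_toFinset.1 hp)
  have hm : ∀ p ∈ S, p.Monic := fun p hp => by
    have h1 := UniqueFactorizationMonoid.normalize_normalized_factor p
      (Multiset.mem_toFinset.1 hp)
    rw [← h1]
    exact Polynomial.monic_normalize (hi p hp).ne_zero
  have hdv : ∀ p ∈ S, p ∣ μ := fun p hp =>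
    UniqueFactorizationMonoid.dvd_of_mem_normalizedFactors (Multiset.mem_toFinset.1 hp)
  have hsum := aux_sum_deg S hm hi μ hμ0 hdv
  rw [← hd] at hsum
  have hq1 : 1 < Fintype.card F := Fintype.one_lt_card
  have hmain := aux_main F S hm hi (Nat.clog (Fintype.card F) d) (by omega)
    (hsum.trans (Nat.le_pow_clog hq1 d))
  have hcount := aux_count F S hm hi d hsum
  refine hmain.trans ?_
  have hqp : (0 : ℝ) < (Fintype.card F : ℝ) ^ d := by
    have : 0 < Fintype.card F := by omega
    positivity
  rw [le_div_iff₀ hqp, mul_comm, ← hcount]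
  set φ : (Fin d → F) → F[X] := fun c =>
    ∑ i : Fin d, Polynomial.C (c i) * Polynomial.X ^ (i : ℕ) with hφ
  set A := Finset.univ.filter (fun c : Fin d → F => IsCoprime (φ c) μ) with hA
  have hsub : {g : F[X] | g.degree < d ∧ ∀ p ∈ S, ¬ p ∣ g} ⊆ φ '' (A : Set (Fin d → F)) := by
    rintro g ⟨hg1, hg2⟩
    have hgφ : φ (fun i => g.coeff i) = g := by
      have := g.sum_fin (fun i a => Polynomial.C a * Polynomial.X ^ i) (by simp) hg1
      rw [hφ]
      simp only
      rw [this, Polynomial.sum_C_mul_X_pow_eq]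
    refine ⟨fun i => g.coeff i, ?_, hgφ⟩
    simp only [hA, Finset.coe_filter, Finset.mem_univ, true_and, Set.mem_ofPred_eq]
    rw [hgφ]
    apply isCoprime_of_irreducible_dvd (fun h => hμ0 h.2)
    intro z hz hzg hzμ
    obtain ⟨p, hp, hzp⟩ :=
      UniqueFactorizationMonoid.exists_mem_normalizedFactors_of_dvd hμ0 hz hzμ
    exact hg2 p (Multiset.mem_toFinset.2 hp) (hzp.symm.dvd.trans hzg)
  have h1 := Set.ncard_le_ncard hsub ((Finset.finite_toSet A).image φ)
  have h2 := Set.ncard_image_le (f := φ) (Finset.finite_toSet A)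
  rw [Set.ncard_coe_finset] at h2
  exact_mod_cast h1.trans h2
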